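/- Suppose E and F are Banach spaces. Let T: Lip(X,E) → Lip(Y,F) be a linear biseparating map, let h: Y → X be a bi-Lipschitz homeomorphism such that (Tf)(y) = Jy(f(h(y))) for all f ∈ Lip(X,E) and y ∈ Y, where Jy: E → F is the linear bijection e ↦ (Tê)(y), and let Y_d = {y ∈ Y : Jy is discontinuous}. Then the map T_d: Lip(X \ h(Y_d), E) → Lip(Y \ Y_d, F) defined by (T_d f)(y) := Jy(f(h(y))) for f ∈ Lip(X \ h(Y_d), E) and y ∈ Y \ Y_d is a well-defined linear bijection that is biseparating and continuous. -/

import Mathlib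

/-!
The two facts behind the theorem are the injectivity of every fibre map `J y : e ↦ (T ê) y` and the
uniform boundedness principle.

*Injectivity* (`fibre_injective`). Suppose `J y e = 0`, that is, `g = T ê` vanishes at `y`. As `T⁻¹` is
separating, it is local (`eq_of_image_eq_on_open`). If `y` is isolated, `g` vanishes on the open set
`{y}`, so `ê` vanishes at `h y`. Otherwise `g` can be cut off to a bounded Lipschitz `g'` that agrees
with `g` on an open set and vanishes on another open set, both of which accumulate at `y`
(`exists_cutoff`; the cut-off factor oscillates near `y`, but its Lipschitz constant at distance `D`
from `y` is `O(1 / D)`, which `‖g‖ = O(D)` compensates). By locality `T⁻¹ g' ∘ h` is equal to `e` on the first set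
and to `0` on the second; by continuity `e = 0`.

*Uniform boundedness* (`family_bound`). If `J z`, for `z` in a metric space, are continuous linear
maps on a Banach space and each `z ↦ J z e` is bounded and Lipschitz, then Banach–Steinhaus, applied to
the maps `J z` and to the difference quotients `(J z - J w) / dist z w`, bounds both families in
operator norm. So `z ↦ J z (f z)` is bounded and Lipschitz with constants controlled by those of `f`.
Off `Y_d` this applies to `J`, which gives that `T_d` is well defined and continuous, and to
`y ↦ (J y)⁻¹`, continuous by the open mapping theorem and pointwise bounded Lipschitz because
`(J y)⁻¹ v = (T⁻¹ v̂) (h y)`, which gives surjectivity. Separation in both directions holds because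
`coz (T_d f) = h⁻¹ (coz f)`.
-/

open Metric Set Function Bornology
open scoped NNReal

/-- `f` is a bounded Lipschitz function. -/
def IsLip {X E : Type*} [PseudoMetricSpace X] [NormedAddCommGroup E] (f : X → E) : Prop :=
  (∃ K : ℝ≥0, LipschitzWith K f) ∧ ∃ C : ℝ, ∀ x, ‖f x‖ ≤ C

/-- The cozero set of `f`. -/
def coz {X E : Type*} [Zero E] (f : X → E) : Set X := {x | f x ≠ 0}

/-- The norm `‖f‖_L = max {‖f‖_∞, L(f)}` on bounded Lipschitz functions. -/
noncomputable def lipNorm {X E : Type*} [PseudoMetricSpace X] [NormedAddCommGroup E]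
    (f : X → E) : ℝ :=
  max (⨆ x, ‖f x‖) (⨆ p : X × X, ‖f p.1 - f p.2‖ / dist p.1 p.2)

/-- `T` is a linear biseparating map from `Lip(X,E)` onto `Lip(Y,F)`:
it maps bounded Lipschitz functions to bounded Lipschitz functions, is linear,
restricts to a bijection between the spaces of bounded Lipschitz functions, and
both `T` and its inverse are separating (disjointness preserving). -/
structure IsBisep (𝕂 : Type*) {X Y E F : Type*} [RCLike 𝕂]
    [PseudoMetricSpace X] [PseudoMetricSpace Y]
    [NormedAddCommGroup E] [NormedSpace 𝕂 E] [NormedAddCommGroup F] [NormedSpace 𝕂 F]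
    (T : (X → E) → (Y → F)) : Prop where
  maps_lip : ∀ f, IsLip f → IsLip (T f)
  map_add : ∀ f g, IsLip f → IsLip g → T (f + g) = T f + T g
  map_smul : ∀ (c : 𝕂) (f : X → E), IsLip f → T (c • f) = c • T f
  inj : ∀ f g, IsLip f → IsLip g → T f = T g → f = g
  surj : ∀ g, IsLip g → ∃ f, IsLip f ∧ T f = g
  sep : ∀ f g, IsLip f → IsLip g → coz f ∩ coz g = ∅ → coz (T f) ∩ coz (T g) = ∅
  sep_inv : ∀ f g, IsLip f → IsLip g → coz (T f) ∩ coz (T g) = ∅ → coz f ∩ coz g = ∅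

/-- `M` bounds both the sup norm and the Lipschitz number of `f`, i.e. `‖f‖_L ≤ M`. -/
def LipBound {X E : Type*} [PseudoMetricSpace X] [NormedAddCommGroup E] (M : ℝ) (f : X → E) :
    Prop :=
  0 ≤ M ∧ (∀ x, ‖f x‖ ≤ M) ∧ ∀ x y, ‖f x - f y‖ ≤ M * dist x y

theorem coz_inter_eq_empty {X E : Type*} [Zero E] {f g : X → E} :
    coz f ∩ coz g = ∅ ↔ ∀ x, f x ≠ 0 → g x = 0 := by
  simp [Set.ext_iff, coz]

section basic

variable {X E : Type*} [PseudoMetricSpace X] [NormedAddCommGroup E]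

theorem LipBound.isLip {M : ℝ} {f : X → E} (hf : LipBound M f) : IsLip f := by
  obtain ⟨h0, h1, h2⟩ := hf
  refine ⟨⟨M.toNNReal, LipschitzWith.of_dist_le_mul fun x y => ?_⟩, M, h1⟩
  rw [dist_eq_norm, Real.coe_toNNReal _ h0]
  exact h2 x y

theorem IsLip.exists_lipBound {f : X → E} (hf : IsLip f) : ∃ M, LipBound M f := by
  obtain ⟨⟨K, hK⟩, C, hC⟩ := hf
  refine ⟨max (K : ℝ) C, le_max_of_le_left K.2, fun x => (hC x).trans (le_max_right _ _),
    fun x y => ?_⟩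
  rw [← dist_eq_norm]
  exact (hK.dist_le_mul x y).trans (mul_le_mul_of_nonneg_right (le_max_left _ _) dist_nonneg)

theorem LipBound.lipNorm_le {M : ℝ} {f : X → E} (hf : LipBound M f) : lipNorm f ≤ M := by
  obtain ⟨h0, h1, h2⟩ := hf
  refine max_le (Real.iSup_le h1 h0) (Real.iSup_le (fun p => ?_) h0)
  exact div_le_of_le_mul₀ dist_nonneg h0 (h2 _ _)

theorem IsLip.lipBound_lipNorm {f : X → E} (hf : IsLip f) : LipBound (lipNorm f) f := by
  obtain ⟨M, h0, h1, h2⟩ := hf.exists_lipBound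
  have b1 : BddAbove (range fun x => ‖f x‖) := ⟨M, by rintro _ ⟨x, rfl⟩; exact h1 x⟩
  have b2 : BddAbove (range fun p : X × X => ‖f p.1 - f p.2‖ / dist p.1 p.2) :=
    ⟨M, by rintro _ ⟨p, rfl⟩; exact div_le_of_le_mul₀ dist_nonneg h0 (h2 _ _)⟩
  refine ⟨le_max_of_le_left (Real.iSup_nonneg fun _ => norm_nonneg _),
    fun x => le_max_of_le_left (le_ciSup b1 x), fun x y => ?_⟩
  rcases eq_or_lt_of_le (dist_nonneg (x := x) (y := y)) with hd | hd
  · have := h2 x y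
    rw [← hd] at this ⊢
    simpa using this
  · rw [← div_le_iff₀ hd]
    exact le_max_of_le_right (le_ciSup b2 (x, y))

theorem IsLip.continuous {f : X → E} (hf : IsLip f) : Continuous f := by
  obtain ⟨⟨K, hK⟩, -⟩ := hf
  exact hK.continuous

theorem isLip_const (e : E) : IsLip (fun _ : X => e) :=
  ⟨⟨0, LipschitzWith.const e⟩, ‖e‖, fun _ => le_rfl⟩

theorem LipBound.comp {Z : Type*} [PseudoMetricSpace Z] {M : ℝ} {f : X → E} (hf : LipBound M f)
    {K : ℝ≥0} {k : Z → X} (hk : LipschitzWith K k) :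
    LipBound ((K + 1) * M) (f ∘ k) := by
  obtain ⟨h0, h1, h2⟩ := hf
  have hKM : 0 ≤ (K : ℝ) * M := mul_nonneg K.2 h0
  refine ⟨by nlinarith, fun z => (h1 _).trans (by nlinarith), fun z w => (h2 _ _).trans ?_⟩
  have := mul_le_mul_of_nonneg_left (hk.dist_le_mul z w) h0
  have := mul_nonneg h0 (dist_nonneg (x := z) (y := w))
  nlinarith

theorem IsLip.comp {Z : Type*} [PseudoMetricSpace Z] {f : X → E} (hf : IsLip f)
    {K : ℝ≥0} {k : Z → X} (hk : LipschitzWith K k) : IsLip (f ∘ k) := by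
  obtain ⟨M, hM⟩ := hf.exists_lipBound
  exact (hM.comp hk).isLip

theorem IsLip.add {f g : X → E} (hf : IsLip f) (hg : IsLip g) : IsLip (f + g) := by
  obtain ⟨⟨K, hK⟩, C, hC⟩ := hf
  obtain ⟨⟨L, hL⟩, D, hD⟩ := hg
  exact ⟨⟨K + L, hK.add hL⟩, C + D, fun x => norm_add_le_of_le (hC x) (hD x)⟩

theorem IsLip.neg {f : X → E} (hf : IsLip f) : IsLip (-f) := by
  obtain ⟨⟨K, hK⟩, C, hC⟩ := hf
  exact ⟨⟨K, hK.neg⟩, C, fun x => by simpa using hC x⟩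

/-- The tent of height `r` and radius `r` around `a`, in the direction `e`. -/
theorem isLip_tent (𝕂 : Type*) [RCLike 𝕂] [NormedSpace 𝕂 E] (a : X) {r : ℝ} (hr : 0 ≤ r)
    (e : E) : IsLip (fun x => ((max 0 (r - dist x a) : ℝ) : 𝕂) • e) := by
  refine LipBound.isLip (M := (r + 1) * ‖e‖) ⟨by positivity, fun x => ?_, fun x y => ?_⟩
  · rw [norm_smul, RCLike.norm_ofReal]
    refine mul_le_mul_of_nonneg_right ?_ (norm_nonneg _)
    rw [abs_of_nonneg (le_max_left _ _)]
    exact max_le (by linarith) (by linarith [dist_nonneg (x := x) (y := a)])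
  · rw [← sub_smul, ← RCLike.ofReal_sub, norm_smul, RCLike.norm_ofReal]
    have h1 : |max 0 (r - dist x a) - max 0 (r - dist y a)| ≤ dist x y := by
      refine (abs_max_sub_max_le_max _ _ _ _).trans (max_le (by simp) ?_)
      have : r - dist x a - (r - dist y a) = dist y a - dist x a := by ring
      rw [this, dist_comm x y]
      exact abs_dist_sub_le y x a
    calc _ ≤ dist x y * ‖e‖ := mul_le_mul_of_nonneg_right h1 (norm_nonneg _)
      _ ≤ (r + 1) * ‖e‖ * dist x y := by
        have := mul_nonneg hr (mul_nonneg (norm_nonneg e) (dist_nonneg (x := x) (y := y)))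
        nlinarith

end basic

/-! ### Families of operators that are pointwise Lipschitz -/

/-- A pointwise bounded and pointwise Lipschitz family of operators acts boundedly on Lipschitz
functions. -/
theorem family_bound {𝕂 Z E F : Type*} [RCLike 𝕂] [MetricSpace Z]
    [NormedAddCommGroup E] [NormedSpace 𝕂 E] [CompleteSpace E]
    [NormedAddCommGroup F] [NormedSpace 𝕂 F]
    (J : Z → E →L[𝕂] F) (hJ : ∀ e, IsLip (fun z => J z e)) :
    ∃ C : ℝ, 0 ≤ C ∧ ∀ (M : ℝ) (f : Z → E), LipBound M f →
      LipBound (C * M) (fun z => J z (f z)) := by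
  obtain ⟨A, hA⟩ := banach_steinhaus (g := J) fun e => by
    obtain ⟨M, -, h1, -⟩ := (hJ e).exists_lipBound
    exact ⟨M, h1⟩
  obtain ⟨B, hB⟩ := banach_steinhaus
    (g := fun p : Z × Z => ((dist p.1 p.2 : ℝ) : 𝕂)⁻¹ • (J p.1 - J p.2)) fun e => by
    obtain ⟨M, h0, -, h2⟩ := (hJ e).exists_lipBound
    refine ⟨M, fun p => ?_⟩
    rw [smul_apply, sub_apply, norm_smul, norm_inv, RCLike.norm_ofReal, abs_of_nonneg dist_nonneg,
      inv_mul_eq_div]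
    exact div_le_of_le_mul₀ dist_nonneg h0 (h2 _ _)
  have hB' : ∀ z w, ‖J z - J w‖ ≤ |B| * dist z w := fun z w => by
    rcases eq_or_ne z w with rfl | hne
    · simp
    · have := (hB (z, w)).trans (le_abs_self B)
      rw [norm_smul, norm_inv, RCLike.norm_ofReal, abs_of_nonneg dist_nonneg, inv_mul_eq_div,
        div_le_iff₀ (dist_pos.2 hne)] at this
      exact this
  have hA' : ∀ z, ‖J z‖ ≤ |A| := fun z => (hA z).trans (le_abs_self A)
  refine ⟨|A| + |B|, by positivity, fun M f ⟨h0, h1, h2⟩ => ⟨by positivity, fun z => ?_,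
    fun z w => ?_⟩⟩
  · calc ‖J z (f z)‖ ≤ |A| * M := (J z).le_of_opNorm_le_of_le (hA' z) (h1 z)
      _ ≤ (|A| + |B|) * M := by gcongr; linarith [abs_nonneg B]
  · have e1 : J z (f z) - J w (f w) = J z (f z - f w) + (J z - J w) (f w) := by
      simp
    rw [e1]
    calc _ ≤ |A| * (M * dist z w) + |B| * dist z w * M :=
          norm_add_le_of_le ((J z).le_of_opNorm_le_of_le (hA' z) (h2 z w))
            ((J z - J w).le_of_opNorm_le_of_le (hB' z w) (h1 w))
      _ = (|A| + |B|) * M * dist z w := by ring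

/-! ### Cutting off a Lipschitz function near a zero -/

/-- Near a non-isolated point `y` there is a set `S` accumulating at `y` such that, relative to the
distance to `y`, points arbitrarily close to `y` are far away from `S`. -/
theorem exists_lacunary_set {Y : Type*} [MetricSpace Y] {y : Y}
    (hy : ∀ ε > 0, ∃ z, z ≠ y ∧ dist z y < ε) :
    ∃ S : Set Y, y ∉ S ∧ y ∈ closure S ∧ y ∈ closure {z | dist z y < 4 * infDist z S} := by
  have hy' : ∀ z : {z // z ≠ y}, ∃ w : {z // z ≠ y}, dist w.1 y ≤ dist z.1 y / 8 := fun z => by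
    obtain ⟨w, hw, hd⟩ := hy (dist z.1 y / 8) (by have := dist_pos.2 z.2; positivity)
    exact ⟨⟨w, hw⟩, hd.le⟩
  choose next hnext using hy'
  obtain ⟨z₀, hz₀, -⟩ := hy 1 one_pos
  let u : ℕ → {z // z ≠ y} := fun n => next^[n] ⟨z₀, hz₀⟩
  have hu : ∀ n, dist (u (n + 1)).1 y ≤ dist (u n).1 y / 8 := fun n => by
    simp only [u, Function.iterate_succ_apply']
    exact hnext _
  have hpos : ∀ n, 0 < dist (u n).1 y := fun n => dist_pos.2 (u n).2
  have hanti : Antitone fun n => dist (u n).1 y :=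
    antitone_nat_of_succ_le fun n => (hu n).trans (by linarith [hpos n])
  have hlt : ∀ m n, m < n → dist (u n).1 y ≤ dist (u m).1 y / 8 := fun m n hmn =>
    (hanti (Nat.succ_le_of_lt hmn)).trans (hu m)
  have hgeom : ∀ n, dist (u n).1 y ≤ dist (u 0).1 y * (1 / 8) ^ n := fun n => by
    induction n with
    | zero => simp
    | succ n ih => rw [pow_succ]; linarith [hu n]
  have hlim : Filter.Tendsto (fun n => (u n).1) Filter.atTop (nhds y) := by
    rw [tendsto_iff_dist_tendsto_zero]
    refine squeeze_zero (fun _ => dist_nonneg) hgeom ?_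
    have := (tendsto_pow_atTop_nhds_zero_of_lt_one (r := (1 / 8 : ℝ)) (by norm_num)
      (by norm_num)).const_mul (dist (u 0).1 y)
    simpa using this
  have htwo : Filter.Tendsto (fun n : ℕ => 2 * n) Filter.atTop Filter.atTop :=
    Filter.tendsto_atTop_mono (fun n => by simp only [id]; omega) Filter.tendsto_id
  have htwo' : Filter.Tendsto (fun n : ℕ => 2 * n + 1) Filter.atTop Filter.atTop :=
    Filter.tendsto_atTop_mono (fun n => by simp only [id]; omega) Filter.tendsto_id
  refine ⟨range fun n => (u (2 * n)).1, ?_, ?_, ?_⟩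
  · rintro ⟨n, hn⟩
    exact (u (2 * n)).2 hn
  · exact mem_closure_of_tendsto (hlim.comp htwo)
      (Filter.Eventually.of_forall fun n => mem_range_self n)
  · refine mem_closure_of_tendsto (hlim.comp htwo') (Filter.Eventually.of_forall fun n => ?_)
    have hp := hpos (2 * n + 1)
    have : dist (u (2 * n + 1)).1 y / 2 ≤
        infDist (u (2 * n + 1)).1 (range fun n => (u (2 * n)).1) := by
      rw [le_infDist (range_nonempty _)]
      rintro _ ⟨k, rfl⟩
      have t1 := dist_triangle (u (2 * n + 1)).1 (u (2 * k)).1 y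
      have t2 := dist_triangle_left (u (2 * k)).1 y (u (2 * n + 1)).1
      rcases lt_or_ge (2 * k) (2 * n + 1) with hk | hk
      · have := hlt _ _ hk
        linarith
      · have := hlt (2 * n + 1) (2 * k) (by omega)
        linarith
    simp only [Function.comp_apply, mem_ofPred_eq]
    linarith

/-- A Lipschitz function vanishing at a non-isolated point `y` can be modified to vanish on one open
set while being kept on another one, both accumulating at `y`. -/
theorem exists_cutoff {𝕂 Y F : Type*} [RCLike 𝕂] [MetricSpace Y]
    [NormedAddCommGroup F] [NormedSpace 𝕂 F] {y : Y}
    (hy : ∀ ε > 0, ∃ z, z ≠ y ∧ dist z y < ε) {g : Y → F} (hg : IsLip g) (hgy : g y = 0) :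
    ∃ (g' : Y → F) (U V : Set Y), IsLip g' ∧ IsOpen U ∧ IsOpen V ∧ y ∈ closure U ∧
      y ∈ closure V ∧ (∀ z ∈ U, g' z = g z) ∧ ∀ z ∈ V, g' z = 0 := by
  obtain ⟨S, hyS, hS, hV⟩ := exists_lacunary_set hy
  obtain ⟨M, h0, h1, h2⟩ := hg.exists_lipBound
  have hs : ∀ z, infDist z S ≤ dist z y := fun z => by
    rw [← infDist_closure]; exact infDist_le_dist_of_mem hS
  have hcont : Continuous fun z => infDist z S := continuous_infDist_pt S
  let q : Y → ℝ := fun z => infDist z S / dist z y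
  let φ : Y → ℝ := fun z => max 0 (min 1 (2 - 8 * q z))
  have hφ0 : ∀ z, 0 ≤ φ z := fun z => le_max_left _ _
  have hφ1 : ∀ z, φ z ≤ 1 := fun z => max_le zero_le_one (min_le_left _ _)
  have hφq : ∀ z w, |φ z - φ w| ≤ 8 * |q z - q w| := fun z w => by
    refine (abs_max_sub_max_le_max _ _ _ _).trans (max_le (by simp) ?_)
    refine (abs_min_sub_min_le_max _ _ _ _).trans (max_le (by simp) ?_)
    have : 2 - 8 * q z - (2 - 8 * q w) = 8 * -(q z - q w) := by ring
    rw [this, abs_mul, abs_neg]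
    norm_num
  have hqD : ∀ z w, |q z - q w| * dist w y ≤ 2 * dist z w := fun z w => by
    have a1 : |infDist z S - infDist w S| ≤ dist z w := by
      rw [abs_le]
      constructor
      · linarith [infDist_le_infDist_add_dist (s := S) (x := w) (y := z), dist_comm w z]
      · linarith [infDist_le_infDist_add_dist (s := S) (x := z) (y := w)]
    have a2 : |dist w y - dist z y| ≤ dist z w := by
      rw [dist_comm z w]; exact abs_dist_sub_le w z y
    have hq0 : 0 ≤ q z := div_nonneg infDist_nonneg dist_nonneg
    have hq1 : q z ≤ 1 := div_le_one_of_le₀ (hs z) dist_nonneg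
    have ez : q z * dist z y = infDist z S :=
      div_mul_cancel_of_imp fun hz => le_antisymm (hz ▸ hs z) infDist_nonneg
    have ew : q w * dist w y = infDist w S :=
      div_mul_cancel_of_imp fun hz => le_antisymm (hz ▸ hs w) infDist_nonneg
    rw [← abs_of_nonneg (dist_nonneg (x := w) (y := y)), ← abs_mul]
    have : (q z - q w) * dist w y =
        (infDist z S - infDist w S) + q z * (dist w y - dist z y) := by
      rw [mul_sub, ez, sub_mul, ew]; ring
    rw [this]
    refine (abs_add_le _ _).trans ?_
    rw [abs_mul, abs_of_nonneg hq0]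
    have := mul_le_mul hq1 a2 (abs_nonneg _) zero_le_one
    linarith
  refine ⟨fun z => ((φ z : ℝ) : 𝕂) • g z, {z | 8 * infDist z S < dist z y},
    {z | dist z y < 4 * infDist z S}, ?_, ?_, ?_, ?_, hV, ?_, ?_⟩
  · refine LipBound.isLip (M := 17 * M) ⟨by positivity, fun z => ?_, fun z w => ?_⟩
    · rw [norm_smul, RCLike.norm_ofReal, abs_of_nonneg (hφ0 z)]
      have := mul_le_mul (hφ1 z) (h1 z) (norm_nonneg _) zero_le_one
      linarith
    · have e1 : ((φ z : ℝ) : 𝕂) • g z - ((φ w : ℝ) : 𝕂) • g w =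
          ((φ z : ℝ) : 𝕂) • (g z - g w) + ((φ z - φ w : ℝ) : 𝕂) • g w := by
        push_cast
        rw [smul_sub, sub_smul]; abel
      have b1 : ‖((φ z : ℝ) : 𝕂) • (g z - g w)‖ ≤ M * dist z w := by
        rw [norm_smul, RCLike.norm_ofReal, abs_of_nonneg (hφ0 z)]
        have := mul_le_mul (hφ1 z) (h2 z w) (norm_nonneg _) zero_le_one
        linarith
      have b2 : ‖((φ z - φ w : ℝ) : 𝕂) • g w‖ ≤ 16 * (M * dist z w) := by
        rw [norm_smul, RCLike.norm_ofReal]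
        have hgw : ‖g w‖ ≤ M * dist w y := by simpa [hgy] using h2 w y
        calc |φ z - φ w| * ‖g w‖ ≤ 8 * |q z - q w| * (M * dist w y) :=
              mul_le_mul (hφq z w) hgw (norm_nonneg _) (by positivity)
          _ = 8 * M * (|q z - q w| * dist w y) := by ring
          _ ≤ 8 * M * (2 * dist z w) :=
              mul_le_mul_of_nonneg_left (hqD z w) (by positivity)
          _ = _ := by ring
      rw [e1]
      exact (norm_add_le_of_le b1 b2).trans (by linarith)
  · exact isOpen_lt (by fun_prop) (by fun_prop)
  · exact isOpen_lt (by fun_prop) (by fun_prop)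
  · refine closure_mono (fun z hz => ?_) hS
    have : z ≠ y := fun hzy => hyS (hzy ▸ hz)
    simpa [infDist_zero_of_mem hz] using this
  · intro z hz
    have hz : 8 * infDist z S < dist z y := hz
    have hD : 0 < dist z y := by linarith [infDist_nonneg (x := z) (s := S)]
    have : q z ≤ 1 / 8 := by
      simp only [q]; rw [div_le_iff₀ hD]; linarith
    have : φ z = 1 := by
      simp only [φ]
      rw [min_eq_left (by linarith), max_eq_right zero_le_one]
    simp [this]
  · intro z hz
    have hz : dist z y < 4 * infDist z S := hz
    have hD : 0 < dist z y := by linarith [hs z, dist_nonneg (x := z) (y := y)]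
    have : 1 / 4 ≤ q z := by
      simp only [q]; rw [le_div_iff₀ hD]; linarith
    have : φ z = 0 :=
      max_eq_left ((min_le_right _ _).trans (by linarith))
    simp [this]

/-! ### The fibre maps of a biseparating map -/

section fibre

variable {𝕂 X Y E F : Type*} [RCLike 𝕂] [MetricSpace X] [MetricSpace Y]
    [NormedAddCommGroup E] [NormedSpace 𝕂 E] [NormedAddCommGroup F] [NormedSpace 𝕂 F]
    {T : (X → E) → (Y → F)} {h : Y → X}

/-- The fibre map `J y : e ↦ (T ê) y`. -/
def fibre (hT : IsBisep 𝕂 T) (y : Y) : E →ₗ[𝕂] F where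
  toFun e := T (fun _ => e) y
  map_add' a b := congrFun (hT.map_add _ _ (isLip_const a) (isLip_const b)) y
  map_smul' c a := congrFun (hT.map_smul c _ (isLip_const a)) y

theorem fibre_apply (hT : IsBisep 𝕂 T) (y : Y) (e : E) : fibre hT y e = T (fun _ => e) y := rfl

theorem fibre_surjective (hT : IsBisep 𝕂 T)
    (hrep : ∀ f, IsLip f → ∀ y, T f y = T (fun _ => f (h y)) y) (y : Y) :
    Surjective (fibre hT y) := fun v => by
  obtain ⟨f, hf, hTf⟩ := hT.surj _ (isLip_const v)
  exact ⟨f (h y), by rw [fibre_apply, ← hrep f hf, hTf]⟩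

/-- Locality of `T⁻¹`. -/
theorem eq_zero_of_image_eq_zero_on_open (hT : IsBisep 𝕂 T)
    (hrep : ∀ f, IsLip f → ∀ y, T f y = T (fun _ => f (h y)) y)
    {K : ℝ≥0} (hK : AntilipschitzWith K h) {f : X → E} (hf : IsLip f) {U : Set Y}
    (hU : IsOpen U) (hfU : ∀ z ∈ U, T f z = 0) {u : Y} (hu : u ∈ U) : f (h u) = 0 := by
  obtain ⟨δ, hδ, hball⟩ := Metric.isOpen_iff.1 hU u hu
  have hK1 : (0 : ℝ) < K + 1 := by positivity
  have hr : 0 < δ / (K + 1) := by positivity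
  set r := δ / ((K : ℝ) + 1) with hrdef
  have hb := isLip_tent 𝕂 (h u) hr.le (f (h u))
  -- `T` of the tent lives where the tent does, hence in `U`, where `T f` vanishes.
  have hdisj := hT.sep_inv _ f hb hf <| coz_inter_eq_empty.2 fun z hz => by
    refine hfU z (hball ?_)
    by_contra hzu
    refine hz ?_
    have hzu : δ ≤ dist z u := not_lt.1 hzu
    have hd := hK.le_mul_dist z u
    have hrd : r ≤ dist (h z) (h u) := by
      rw [hrdef, div_le_iff₀ hK1]
      linarith [dist_nonneg (x := h z) (y := h u)]
    rw [hrep _ hb, max_eq_left (by linarith), RCLike.ofReal_zero, zero_smul]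
    exact map_zero (fibre hT z)
  by_contra hne
  refine hne (coz_inter_eq_empty.1 hdisj (h u) ?_)
  rw [dist_self, sub_zero, max_eq_right hr.le]
  exact smul_ne_zero (RCLike.ofReal_ne_zero.2 hr.ne') hne

theorem eq_of_image_eq_on_open (hT : IsBisep 𝕂 T)
    (hrep : ∀ f, IsLip f → ∀ y, T f y = T (fun _ => f (h y)) y)
    {K : ℝ≥0} (hK : AntilipschitzWith K h) {f g : X → E} (hf : IsLip f) (hg : IsLip g)
    {U : Set Y} (hU : IsOpen U) (hfU : ∀ z ∈ U, T f z = T g z) {u : Y} (hu : u ∈ U) :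
    f (h u) = g (h u) := by
  have hTsub : T (f + -g) = T f + -T g := by
    rw [hT.map_add _ _ hf hg.neg, ← neg_one_smul 𝕂 g, hT.map_smul _ _ hg, neg_one_smul]
  have := eq_zero_of_image_eq_zero_on_open hT hrep hK (hf.add hg.neg) hU
    (fun z hz => by rw [hTsub]; simp [hfU z hz]) hu
  exact add_neg_eq_zero.1 this

theorem fibre_injective (hT : IsBisep 𝕂 T)
    (hrep : ∀ f, IsLip f → ∀ y, T f y = T (fun _ => f (h y)) y)
    (hcont : Continuous h) {K : ℝ≥0} (hK : AntilipschitzWith K h) (y : Y) :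
    Injective (fibre hT y) := by
  rw [injective_iff_map_eq_zero]
  intro e he
  rw [fibre_apply] at he
  have hzero : T (fun _ => 0) = 0 := funext fun z => map_zero (fibre hT z)
  by_cases hy : ∀ ε > 0, ∃ z, z ≠ y ∧ dist z y < ε
  · obtain ⟨g', U, V, hg', hU, hV, hyU, hyV, hgU, hgV⟩ :=
      exists_cutoff (𝕂 := 𝕂) hy (hT.maps_lip _ (isLip_const e)) he
    obtain ⟨f, hf, rfl⟩ := hT.surj _ hg'
    have hfc : Continuous fun z => f (h z) := hf.continuous.comp hcont
    have h1 : f (h y) = e := closure_minimal (t := {z | f (h z) = e})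
      (fun z hz => eq_of_image_eq_on_open hT hrep hK hf (isLip_const e) hU hgU hz)
      (isClosed_eq hfc continuous_const) hyU
    have h2 : f (h y) = 0 := closure_minimal (t := {z | f (h z) = 0})
      (fun z hz => eq_zero_of_image_eq_zero_on_open hT hrep hK hf hV hgV hz)
      (isClosed_eq hfc continuous_const) hyV
    rw [← h1, h2]
  · push Not at hy
    obtain ⟨ε, hε, hiso⟩ := hy
    -- The ball around the isolated point `y` is open and `T ê` vanishes on it.
    exact eq_zero_of_image_eq_zero_on_open hT hrep hK (isLip_const e) (isOpen_ball (x := y) (ε := ε))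
      (fun z hz => by
        have : z = y := by
          by_contra hne
          exact absurd (hiso z hne) (not_le.2 hz)
        rw [this, he]) (mem_ball_self hε)

end fibre

/-- For Banach `E`, `F` and a biseparating `T` represented by a bi-Lipschitz
homeomorphism `h` and the maps `J y : e ↦ (T ê) y`, with `Y_d` the set of points where `J y` is
discontinuous, the restricted map `T_d : Lip(X \ h(Y_d), E) → Lip(Y \ Y_d, F)`,
`(T_d f) y = J y (f (h y))`, is a well-defined linear bijection which is biseparating and
continuous. -/
theorem biseparating_restricted_map
    {𝕂 X Y E F : Type*} [RCLike 𝕂]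
    [MetricSpace X] [CompleteSpace X] [MetricSpace Y] [CompleteSpace Y]
    [NormedAddCommGroup E] [NormedSpace 𝕂 E] [Nontrivial E] [CompleteSpace E]
    [NormedAddCommGroup F] [NormedSpace 𝕂 F] [Nontrivial F] [CompleteSpace F]
    (hXb : IsBounded (univ : Set X)) (hYb : IsBounded (univ : Set Y))
    (T : (X → E) → (Y → F)) (hT : IsBisep 𝕂 T)
    (h : Y → X) (hbij : Bijective h)
    (hlip : ∃ K : ℝ≥0, LipschitzWith K h) (halip : ∃ K : ℝ≥0, AntilipschitzWith K h)
    (hrep : ∀ f, IsLip f → ∀ y, T f y = T (fun _ => f (h y)) y)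
    (Yd : Set Y) (hYd : Yd = {y : Y | ¬ Continuous (fun e : E => T (fun _ => e) y)}) :
    (∀ y : {y : Y // y ∉ Yd}, h ↑y ∉ h '' Yd) ∧
    ∃ Td : ({x : X // x ∉ h '' Yd} → E) → ({y : Y // y ∉ Yd} → F),
      (∀ f, IsLip f → ∀ (y : {y : Y // y ∉ Yd}) (hx : h ↑y ∉ h '' Yd),
        Td f y = T (fun _ => f ⟨h ↑y, hx⟩) ↑y) ∧
      IsBisep 𝕂 Td ∧
      ∃ C : ℝ, 0 ≤ C ∧ ∀ f, IsLip f → lipNorm (Td f) ≤ C * lipNorm f := by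
  obtain ⟨K, hK⟩ := hlip
  obtain ⟨K', hK'⟩ := halip
  have hmem : ∀ y : {y : Y // y ∉ Yd}, h ↑y ∉ h '' Yd := fun y ⟨z, hz, hzy⟩ =>
    y.2 (hbij.1 hzy ▸ hz)
  have hinj := fibre_injective hT hrep hK.continuous hK'
  have hcont : ∀ y : {y : Y // y ∉ Yd}, Continuous (fibre hT y.1) := fun y => by
    by_contra hc
    exact y.2 (hYd.symm ▸ hc : y.1 ∈ Yd)
  let k : {y : Y // y ∉ Yd} → {x : X // x ∉ h '' Yd} := fun y => ⟨h y, hmem y⟩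
  have hk : LipschitzWith K k := fun a b => hK a.1 b.1
  let J : {y : Y // y ∉ Yd} → E ≃L[𝕂] F := fun y =>
    ContinuousLinearEquiv.ofBijective ⟨fibre hT y.1, hcont y⟩
      (LinearMap.ker_eq_bot.2 (hinj y.1)) (LinearMap.range_eq_top.2 (fibre_surjective hT hrep y.1))
  have hJ : ∀ y e, J y e = T (fun _ => e) y.1 := fun _ _ => rfl
  have hval : LipschitzWith 1 (Subtype.val : {y : Y // y ∉ Yd} → Y) := LipschitzWith.subtype_val _
  obtain ⟨C, hC0, hC⟩ := family_bound (fun y => (J y : E →L[𝕂] F)) fun e =>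
    (hT.maps_lip _ (isLip_const e)).comp hval
  obtain ⟨C', hC'0, hC'⟩ := family_bound (fun y => ((J y).symm : F →L[𝕂] E)) fun v => by
    obtain ⟨f, hf, hTf⟩ := hT.surj _ (isLip_const v)
    have : (fun y => ((J y).symm : F →L[𝕂] E) v) = (f ∘ h) ∘ Subtype.val := funext fun y => by
      change (J y).symm v = f (h y)
      rw [ContinuousLinearEquiv.symm_apply_eq, hJ, ← hrep f hf, hTf]
    rw [this]
    exact (hf.comp hK).comp hval
  -- The inverse of `k`, Lipschitz because `h` is antilipschitz.
  have hksurj : ∀ x, ∃ y, k y = x := fun x => by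
    obtain ⟨y, hy⟩ := hbij.2 x.1
    exact ⟨⟨y, fun hyd => x.2 ⟨y, hyd, hy⟩⟩, Subtype.ext hy⟩
  choose l hl using hksurj
  have hlk : LipschitzWith K' l :=
    (show AntilipschitzWith K' k from fun a b => hK' a.1 b.1).to_rightInverse hl
  have hTd : ∀ M (f : {x : X // x ∉ h '' Yd} → E), LipBound M f →
      LipBound (C * ((K + 1) * M)) (fun y => J y (f (k y))) := fun M f hf => hC _ _ (hf.comp hk)
  refine ⟨hmem, fun f y => J y (f (k y)), fun f _ y _ => rfl, ?_,
    C * (K + 1), by positivity, fun f hf => ?_⟩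
  · refine ⟨fun f hf => ?_, fun f g _ _ => ?_, fun c f _ => ?_, fun f g _ _ hfg => ?_,
      fun g hg => ?_, fun f g _ _ hfg => ?_, fun f g _ _ hfg => ?_⟩
    · obtain ⟨M, hM⟩ := hf.exists_lipBound
      exact (hTd M f hM).isLip
    · exact funext fun y => map_add (J y) _ _
    · exact funext fun y => map_smul (J y) _ _
    · funext x
      rw [← hl x]
      exact (J (l x)).injective (congrFun hfg (l x))
    · obtain ⟨M, hM⟩ := hg.exists_lipBound
      have hkl : ∀ y, l (k y) = y := fun y => Subtype.ext (hbij.1 (Subtype.ext_iff.1 (hl (k y))))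
      refine ⟨fun x => (J (l x)).symm (g (l x)), ((hC' M g hM).comp hlk).isLip, funext fun y => ?_⟩
      change J y ((J (l (k y))).symm (g (l (k y)))) = g y
      rw [hkl, ContinuousLinearEquiv.apply_symm_apply]
    · rw [coz_inter_eq_empty] at hfg ⊢
      intro y hy
      rw [hfg (k y) fun h0 => hy (by rw [h0, map_zero]), map_zero]
    · rw [coz_inter_eq_empty] at hfg ⊢
      intro x hx
      have := hfg (l x) (by rwa [Ne, hl, map_eq_zero_iff _ (J (l x)).injective])
      rwa [hl, map_eq_zero_iff _ (J (l x)).injective] at this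
  · exact (hTd _ f hf.lipBound_lipNorm).lipNorm_le.trans (by rw [mul_assoc])
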